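/- Let n ≥ 1, let A : ℝ → M_n(ℝ) be continuous, let Φ : ℝ → M_n(ℝ) be differentiable with Φ'(t) = Φ(t) A(t) − A(t) Φ(t) for all t ∈ ℝ, let λ₀ > 0 and let w ∈ ℝⁿ, w ≠ 0, with Φ(0) w = λ₀ w. Then there exists a twice differentiable J : ℝ → ℝⁿ, not identically zero, such that, setting N(t) = J'(t) + A(t) J(t), one has N'(t) + A(t) N(t) + Φ(t) J(t) = 0 for all t, J(0) = 0, and J(kπ/√λ₀) = 0 for every integer k. -/

import Mathlib

/-!
Let `W` be the parallel field `∇W = 0` with `W 0 = w`, a global solution of the linear equation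
`W' = -A W` (`exists_hasDerivAt_linear`). Since `∇Φ = 0`, the field `ΦW - lam W` is again parallel;
it vanishes at `0`, hence everywhere (`eq_zero_of_hasDerivAt_linear`), so `ΦW = lam W` along the
whole curve. Therefore `J t = sin (√lam t) W t` satisfies `∇∇J = -lam J = -ΦJ`, and it vanishes
where the sine does.

Mathlib's Picard–Lindelöf theorem is local, so the global solution of the linear equation is built
as the sum of the Peano–Baker series, whose `k`-th term is bounded on `[-T, T]` by
`‖w‖ (M |t|) ^ k / k!` (`norm_picardTerm_le`).
-/

open Real Matrix

noncomputable section

section LinearODE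

variable {E : Type*} [NormedAddCommGroup E] [NormedSpace ℝ E]

/-- The `k`-th term of the Picard (Peano–Baker) series for `x' = B x`, `x 0 = x₀`: the `k`-fold
iterated integral `∫₀ᵗ B(s₁) ∫₀^{s₁} B(s₂) ⋯ x₀`. -/
def picardTerm (B : ℝ → E →L[ℝ] E) (x₀ : E) : ℕ → ℝ → E
  | 0 => fun _ => x₀
  | k + 1 => fun t => ∫ s in (0 : ℝ)..t, B s (picardTerm B x₀ k s)

variable {B : ℝ → E →L[ℝ] E}

lemma continuous_picardTerm (hB : Continuous B) (x₀ : E) (k : ℕ) :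
    Continuous (picardTerm B x₀ k) := by
  induction k with
  | zero => exact continuous_const
  | succ k ih =>
    exact intervalIntegral.continuous_primitive
      (fun a b => (hB.clm_apply ih).intervalIntegrable a b) 0

lemma hasDerivAt_picardTerm_succ [CompleteSpace E] (hB : Continuous B) (x₀ : E) (k : ℕ) (t : ℝ) :
    HasDerivAt (picardTerm B x₀ (k + 1)) (B t (picardTerm B x₀ k t)) t :=
  (hB.clm_apply (continuous_picardTerm hB x₀ k)).integral_hasStrictDerivAt 0 t |>.hasDerivAt

lemma norm_picardTerm_le {x₀ : E} {T M : ℝ} (hM : ∀ t ∈ Set.Icc (-T) T, ‖B t‖ ≤ M)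
    (k : ℕ) {t : ℝ} (ht : t ∈ Set.Icc (-T) T) :
    ‖picardTerm B x₀ k t‖ ≤ ‖x₀‖ * ((M * |t|) ^ k / k.factorial) := by
  have hM0 : 0 ≤ M := (norm_nonneg _).trans (hM t ht)
  induction k generalizing t with
  | zero => simp [picardTerm]
  | succ k ih =>
    have h0 : (0 : ℝ) ∈ Set.Icc (-T) T := by
      constructor <;> linarith [ht.1, ht.2]
    calc ‖picardTerm B x₀ (k + 1) t‖
        ≤ |∫ s in (0 : ℝ)..t, (‖x₀‖ * M ^ (k + 1) / k.factorial) * |s| ^ k| := by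
          refine intervalIntegral.norm_integral_le_abs_of_norm_le ?_
            (Continuous.intervalIntegrable (by fun_prop) _ _)
          refine MeasureTheory.ae_restrict_of_forall_mem measurableSet_uIoc fun s hs => ?_
          have hs' : s ∈ Set.Icc (-T) T :=
            Set.uIcc_subset_Icc h0 ht (Set.uIoc_subset_uIcc hs)
          calc ‖B s (picardTerm B x₀ k s)‖
              ≤ M * (‖x₀‖ * ((M * |s|) ^ k / k.factorial)) :=
                (B s).le_of_opNorm_le_of_le (hM s hs') (ih hs')
            _ = _ := by ring
      _ = ‖x₀‖ * M ^ (k + 1) / k.factorial * (|t| ^ (k + 1) / (k + 1)) := by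
          have h := integral_pow_abs_sub_uIoc (a := 0) (b := t) (n := k)
          simp only [sub_zero] at h
          rw [intervalIntegral.integral_const_mul, abs_mul,
            intervalIntegral.abs_intervalIntegral_eq, h, abs_of_nonneg (by positivity),
            abs_of_nonneg (by positivity)]
      _ = _ := by
          rw [Nat.factorial_succ]
          push_cast
          rw [mul_pow]
          field_simp

/-- A linear equation with continuous coefficients has a solution on all of `ℝ`. -/
lemma exists_hasDerivAt_linear [CompleteSpace E] (hB : Continuous B) (x₀ : E) :
    ∃ W : ℝ → E, W 0 = x₀ ∧ ∀ t, HasDerivAt W (B t (W t)) t := by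
  have bound (T : ℝ) : ∃ M, ∀ t ∈ Set.Icc (-T) T, ‖B t‖ ≤ M :=
    isCompact_Icc.exists_bound_of_continuousOn hB.continuousOn
  have mem (t : ℝ) : t ∈ Set.Icc (-(|t| + 1)) (|t| + 1) := by
    constructor <;> linarith [neg_abs_le t, le_abs_self t]
  have summ (t : ℝ) : Summable fun k => picardTerm B x₀ k t := by
    obtain ⟨M, hM⟩ := bound (|t| + 1)
    exact .of_norm_bounded ((Real.summable_pow_div_factorial (M * |t|)).mul_left ‖x₀‖)
      fun k => norm_picardTerm_le hM k (mem t)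
  have zero (k : ℕ) : picardTerm B x₀ (k + 1) 0 = 0 := by simp [picardTerm]
  refine ⟨fun t => ∑' k, picardTerm B x₀ k t, ?_, fun t => ?_⟩
  · simp only [(summ 0).tsum_eq_zero_add, zero, tsum_zero, add_zero]
    rfl
  · obtain ⟨M, hM⟩ := bound (|t| + 1)
    have hM0 : 0 ≤ M := (norm_nonneg _).trans (hM t (mem t))
    have h0 : (0 : ℝ) ∈ Set.Ioo (-(|t| + 1)) (|t| + 1) := by
      constructor <;> linarith [abs_nonneg t]
    have ht : t ∈ Set.Ioo (-(|t| + 1)) (|t| + 1) := by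
      constructor <;> linarith [neg_abs_le t, le_abs_self t]
    have key := hasDerivAt_tsum_of_isPreconnected
      (g := fun k => picardTerm B x₀ (k + 1)) (g' := fun k s => B s (picardTerm B x₀ k s))
      (((Real.summable_pow_div_factorial (M * (|t| + 1))).mul_left ‖x₀‖).mul_left M)
      isOpen_Ioo isPreconnected_Ioo
      (fun k s _ => hasDerivAt_picardTerm_succ hB x₀ k s)
      (fun k s hs => by
        have hs' := Set.Ioo_subset_Icc_self hs
        have hst : |s| ≤ |t| + 1 := abs_le.2 hs'
        refine (B s).le_of_opNorm_le_of_le (hM s hs') ((norm_picardTerm_le hM k hs').trans ?_)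
        gcongr)
      h0 (by simpa only [zero] using summable_zero) ht
    have hfun : (fun s => ∑' k, picardTerm B x₀ k s) =
        fun s => x₀ + ∑' k, picardTerm B x₀ (k + 1) s := by
      funext s
      rw [(summ s).tsum_eq_zero_add]
      rfl
    rw [(B t).map_tsum (summ t), hfun]
    exact key.const_add x₀

/-- Uniqueness for a linear equation, where the Lipschitz constant is only locally uniform in
time. -/
lemma eq_zero_of_hasDerivAt_linear (hB : Continuous B) {V : ℝ → E}
    (hV : ∀ t, HasDerivAt V (B t (V t)) t) (h0 : V 0 = 0) (t : ℝ) : V t = 0 := by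
  obtain ⟨M, hM⟩ := (isCompact_Icc (a := -(|t| + 1)) (b := |t| + 1)).exists_bound_of_continuousOn
    hB.continuousOn
  refine ODE_solution_unique_of_mem_Ioo (v := fun s x => B s x) (s := fun _ => Set.univ)
    (K := M.toNNReal) (t₀ := 0) (g := fun _ => 0) (a := -(|t| + 1)) (b := |t| + 1)
    (fun s hs => ?_) ?_ (fun s _ => ⟨hV s, trivial⟩) (fun s _ => ⟨?_, trivial⟩) h0 ?_
  · refine ((B s).lipschitz.weaken ?_).lipschitzOnWith
    exact NNReal.le_toNNReal_of_coe_le (hM s (Set.Ioo_subset_Icc_self hs))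
  · constructor <;> linarith [abs_nonneg t]
  · simpa using hasDerivAt_const s (0 : E)
  · constructor <;> linarith [neg_abs_le t, le_abs_self t]

end LinearODE

lemma hasDerivAt_mulVec {m n : ℕ} {P : ℝ → Matrix (Fin m) (Fin n) ℝ} {P' : Matrix (Fin m) (Fin n) ℝ}
    {x : ℝ → Fin n → ℝ} {x' : Fin n → ℝ} {t : ℝ}
    (hP : ∀ i j, HasDerivAt (fun s => P s i j) (P' i j) t) (hx : HasDerivAt x x' t) :
    HasDerivAt (fun s => P s *ᵥ x s) (P' *ᵥ x t + P t *ᵥ x') t := by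
  rw [hasDerivAt_pi] at hx ⊢
  intro i
  simp only [Pi.add_apply, mulVec, dotProduct, ← Finset.sum_add_distrib]
  exact HasDerivAt.fun_sum fun j _ => (hP i j).mul (hx j)

/-- Conjugate points for locally symmetric SODEs, along the curve: if the Jacobi
endomorphism `Φ(t)` satisfies `Φ' = ΦA − AΦ` (i.e. `∇Φ = 0` along the curve) and
`Φ(0)` has an eigenvector `w ≠ 0` with eigenvalue `λ₀ > 0`, then there exists a
nontrivial solution `J` of the Jacobi equation `∇∇J + ΦJ = 0` (with `∇W = W' + AW`)
vanishing at `0` and at the times `kπ/√λ₀` for every integer `k`. -/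
theorem locally_symmetric_conjugate_points
    (n : ℕ) (hn : 1 ≤ n) (A : ℝ → Matrix (Fin n) (Fin n) ℝ) (hA : Continuous A)
    (Φ : ℝ → Matrix (Fin n) (Fin n) ℝ)
    (hΦ : ∀ (t : ℝ) (i j : Fin n),
      HasDerivAt (fun s => Φ s i j) ((Φ t * A t - A t * Φ t) i j) t)
    (lam : ℝ) (hlam : 0 < lam) (w : Fin n → ℝ) (hw : w ≠ 0)
    (heig : Φ 0 *ᵥ w = lam • w) :
    ∃ J N : ℝ → Fin n → ℝ,
      (∃ t : ℝ, J t ≠ 0) ∧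
      (∀ t : ℝ, DifferentiableAt ℝ J t) ∧
      (∀ t : ℝ, N t = deriv J t + A t *ᵥ J t) ∧
      (∀ t : ℝ, DifferentiableAt ℝ N t) ∧
      (∀ t : ℝ, deriv N t + A t *ᵥ N t + Φ t *ᵥ J t = 0) ∧
      J 0 = 0 ∧
      (∀ k : ℤ, J ((k : ℝ) * π / Real.sqrt lam) = 0) := by
  have hB : Continuous fun t => -(A t).mulVecLin.toContinuousLinearMap := by
    refine (continuous_clm_apply.2 fun y => ?_).neg
    exact hA.matrix_mulVec continuous_const
  obtain ⟨W, hW0, hW⟩ := exists_hasDerivAt_linear hB w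
  replace hW (t : ℝ) : HasDerivAt W (-(A t *ᵥ W t)) t := hW t
  have hΦW (t : ℝ) : Φ t *ᵥ W t = lam • W t := by
    -- The defect `ΦW - lam W` is itself parallel along the curve, and vanishes at `0`.
    refine sub_eq_zero.1 (eq_zero_of_hasDerivAt_linear hB
      (V := fun t => Φ t *ᵥ W t - lam • W t) (fun s => ?_) (by simp [hW0, heig]) t)
    convert! (hasDerivAt_mulVec (hΦ s) (hW s)).sub ((hW s).const_smul lam) using 1
    change -(A s *ᵥ (Φ s *ᵥ W s - lam • W s)) = _
    simp only [mulVec_sub, sub_mulVec, mulVec_neg, mulVec_smul, mulVec_mulVec, smul_neg]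
    abel
  set c := √lam with hc
  have hc0 : 0 < c := Real.sqrt_pos.2 hlam
  have hcc : c * c = lam := Real.mul_self_sqrt hlam.le
  have hlin (t : ℝ) : HasDerivAt (fun s => c * s) c t := by
    simpa using (hasDerivAt_id t).const_mul c
  have hJ (t : ℝ) : HasDerivAt (fun s => sin (c * s) • W s)
      (sin (c * t) • -(A t *ᵥ W t) + (cos (c * t) * c) • W t) t :=
    (hlin t).sin.fun_smul (hW t)
  have hN (t : ℝ) : HasDerivAt (fun s => (c * cos (c * s)) • W s)
      ((c * cos (c * t)) • -(A t *ᵥ W t) + (c * (-sin (c * t) * c)) • W t) t :=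
    ((hlin t).cos.const_mul c).fun_smul (hW t)
  refine ⟨fun t => sin (c * t) • W t, fun t => (c * cos (c * t)) • W t, ?_,
    fun t => (hJ t).differentiableAt, fun t => ?_, fun t => (hN t).differentiableAt,
    fun t => ?_, by simp, fun k => ?_⟩
  · -- If `J` vanished identically, then so would `J'`, whose value at `0` is `c • w`.
    by_contra! h
    have h1 := (hJ 0).unique ((hasDerivAt_const 0 0).congr_of_eventuallyEq (.of_forall h))
    simp [hW0, hc0.ne', hw] at h1
  · rw [(hJ t).deriv, mulVec_smul, smul_neg, mul_comm (cos (c * t)) c]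
    abel
  · rw [(hN t).deriv, mulVec_smul, mulVec_smul, hΦW, ← hcc]
    module
  · have : c * (k * π / c) = k * π := by field_simp
    simp only [this, sin_int_mul_pi, zero_smul]
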